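/- Let SP(τ) be the set of pairs (θ,{δ}) where θ is a rooted subtree of τ sharing the root and δ is the single tree remaining when θ is removed from τ. Then for every nonempty colored rooted tree τ obtained by attaching a tree δ to a vertex of a tree θ, the combinatorial identity α(θ)·α(δ)·β(τ,θ,δ) = α(τ)·γ(τ,θ,{δ}) holds, where β(τ,θ,δ) counts the multiplicity of τ in the expansion of ∂F(θ)F(δ) as a sum of elementary differentials, and γ is the composition coefficient. -/

import Mathlib

inductive CTree (m : ℕ) : Type
  | node : Fin (m + 1) → List (CTree m) → CTree m

namespace CTree

variable {m : ℕ}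

def rho : CTree m → ℚ
  | .node l ts => (if (l : ℕ) = 0 then 1 else 1/2) + (ts.attach.map (fun t => rho t.1)).sum
decreasing_by
  all_goals try simp only [CTree.node.sizeOf_spec, List.cons.sizeOf_spec, List.nil.sizeOf_spec]
  all_goals try have := List.sizeOf_lt_of_mem t.2
  all_goals omega

def height : CTree m → ℕ
  | .node _ ts => 1 + (ts.attach.map (fun t => height t.1)).foldr max 0
decreasing_by
  all_goals try simp only [CTree.node.sizeOf_spec, List.cons.sizeOf_spec, List.nil.sizeOf_spec]
  all_goals try have := List.sizeOf_lt_of_mem t.2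
  all_goals omega

def ram : CTree m → ℕ
  | .node _ [] => 1
  | .node _ [t] => ram t
  | .node _ ts => 1 + (ts.attach.map (fun t => ram t.1)).foldr max 0
decreasing_by
  all_goals try simp only [CTree.node.sizeOf_spec, List.cons.sizeOf_spec, List.nil.sizeOf_spec]
  all_goals try have := List.sizeOf_lt_of_mem t.2
  all_goals omega

def dbl : CTree m → ℕ
  | .node _ [] => 1
  | .node _ ts =>
      let ds := ts.attach.map (fun t => dbl t.1)
      let M := ds.foldr max 0
      if 2 ≤ ds.count M then M + 1 else M
decreasing_by
  all_goals try simp only [CTree.node.sizeOf_spec, List.cons.sizeOf_spec, List.nil.sizeOf_spec]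
  all_goals try have := List.sizeOf_lt_of_mem t.2
  all_goals omega


mutual
/-- equality of colored rooted trees as unordered trees -/
def eqv : CTree m → CTree m → Bool
  | .node l ts, .node l' ts' => l == l' && bagEqv ts ts'
termination_by a b => (sizeOf a, 0)

/-- multiset equality of lists of trees, up to `eqv` -/
def bagEqv : List (CTree m) → List (CTree m) → Bool
  | [], us => us.isEmpty
  | t :: ts, us => (pickEqv t us).elim false (fun rest => bagEqv ts rest)
termination_by ts _ => (sizeOf ts, 0)

/-- remove one element `eqv` to `t` from the list, if possible -/
def pickEqv (t : CTree m) : List (CTree m) → Option (List (CTree m))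
  | [] => none
  | u :: us => if eqv t u then some us else (pickEqv t us).map (u :: ·)
termination_by us => (sizeOf t, sizeOf us)
end


/-- symmetry factor ∏ rᵢ! of a list of trees, where rᵢ are the multiplicities of
the distinct (as unordered trees) elements -/
def symFact : List (CTree m) → ℕ
  | [] => 1
  | t :: ts => (1 + (ts.filter (fun u => eqv t u)).length) * symFact ts

/-- the coefficient α of B--series -/
def alpha : CTree m → ℚ
  | .node _ ts => ((symFact ts : ℚ))⁻¹ * (ts.attach.map (fun t => alpha t.1)).prod
decreasing_by
  all_goals try simp only [CTree.node.sizeOf_spec, List.cons.sizeOf_spec, List.nil.sizeOf_spec]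
  all_goals try have := List.sizeOf_lt_of_mem t.2
  all_goals omega

/-- the order of the automorphism group of a rooted colored tree
(root-fixing, color-preserving): the product over all vertices of the factorials of the
multiplicities of the isomorphism classes of the subtrees hanging off that vertex -/
def autCard : CTree m → ℕ
  | .node _ ts => symFact ts * (ts.attach.map (fun t => autCard t.1)).prod
decreasing_by
  all_goals try simp only [CTree.node.sizeOf_spec, List.cons.sizeOf_spec, List.nil.sizeOf_spec]
  all_goals try have := List.sizeOf_lt_of_mem t.2
  all_goals omega

/-- All ordered splittings of a tree `τ` into a root-sharing subtree `θ` (`none` = empty tree)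
together with the list of remainder trees `ω` left over when `θ` is removed from `τ`. -/
def split : CTree m → List (Option (CTree m) × List (CTree m))
  | .node l ts =>
    (none, [.node l ts]) ::
    ((ts.attach.map (fun t => split t.1)).sections.map
      (fun cs => (some (.node l (cs.filterMap Prod.fst)), (cs.map Prod.snd).flatten)))
decreasing_by
  all_goals try simp only [CTree.node.sizeOf_spec, List.cons.sizeOf_spec, List.nil.sizeOf_spec]
  all_goals try have := List.sizeOf_lt_of_mem t.2
  all_goals omega

/-- Composition of B--series coefficient maps: `comp φx φy` is the coefficient map of
`B(φy, B(φx, x₀; h); h)`.  Coefficient maps are defined on `Option (CTree m)`,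
with `none` playing the role of the empty tree ∅. -/
def comp {R : Type*} [CommRing R] (φx φy : Option (CTree m) → R) : Option (CTree m) → R
  | none => φy none
  | some τ => ((split τ).map (fun p => φy p.1 * (p.2.map (fun δ => φx (some δ))).prod)).sum

/-- The bilinear operation `∗`: sum over splittings with exactly one remainder tree. -/
def star {R : Type*} [CommRing R] (φx φy : Option (CTree m) → R) (τ : CTree m) : R :=
  (((split τ).filter (fun p => p.2.length == 1)).map
    (fun p => φy p.1 * (p.2.map (fun δ => φx (some δ))).prod)).sum


mutual
/-- all trees obtained by attaching δ as an extra child of some vertex of the tree -/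
def attachT (δ : CTree m) : CTree m → List (CTree m)
  | .node l ts => .node l (δ :: ts) :: (attachL δ ts).map (fun ts' => .node l ts')
termination_by t => sizeOf t

/-- all lists obtained from `ts` by attaching δ at some vertex of some element -/
def attachL (δ : CTree m) : List (CTree m) → List (List (CTree m))
  | [] => []
  | t :: ts => ((attachT δ t).map (· :: ts)) ++ (attachL δ ts).map (t :: ·)
termination_by ts => sizeOf ts
end

/-- β(τ,θ,δ): the multiplicity of τ in the expansion of ∂F(θ)F(δ), i.e. the number of ways
to attach δ to a vertex of θ so as to obtain (a tree isomorphic to) τ -/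
def betaC (τ θ δ : CTree m) : ℕ :=
  ((attachT δ θ).filter (fun σ => eqv σ τ)).length

/-- γ(τ,θ,{δ}): the composition coefficient, i.e. the number of ordered splittings of τ into
the root-sharing subtree θ with single remainder tree δ -/
def gammaC (τ θ δ : CTree m) : ℕ :=
  ((split τ).filter (fun p =>
      match p.1, p.2 with
      | some θ', [δ'] => eqv θ' θ && eqv δ' δ
      | _, _ => false)).length

end CTree

/-!
Let `N(σ, τ)` be the number of isomorphisms `σ → τ`, which is `1 / α(τ)` if `σ ≅ τ` and `0`
otherwise. We count in two ways the isomorphisms onto `τ` from the trees obtained by attaching `δ`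
to a vertex of `θ`. Summing over the vertex gives `β(τ, θ, δ) / α(τ)`. On the other hand, such an
isomorphism amounts to an edge of `τ`, the image of the attaching edge, together with isomorphisms
from `θ` and `δ` onto the two parts into which `τ` falls when this edge is cut. The splittings of
`τ` with one remainder tree and nonempty root part are its edge cuts, so summing over the edge
gives `γ(τ, θ, {δ}) / (α(θ) α(δ))`.
-/

namespace CTree

section ListSums

variable {ι κ M : Type*}

theorem sum_map_sum_map_comm [AddCommMonoid M] (f : ι → κ → M) (l : List ι) (l' : List κ) :
    (l.map fun i ↦ (l'.map (f i)).sum).sum = (l'.map fun k ↦ (l.map fun i ↦ f i k).sum).sum := by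
  simpa using Multiset.sum_map_sum_map (l : Multiset ι) (l' : Multiset κ) (f := f)

theorem countP_nsmul_eq_sum_map_ite [AddMonoid M] (p : ι → Bool) (l : List ι) (c : M) :
    l.countP p • c = (l.map fun i ↦ if p i then c else 0).sum := by
  induction l with
  | nil => simp
  | cons i l ih => cases h : p i <;> simp [h, ← ih, succ_nsmul']

theorem sum_map_sections_cons [AddCommMonoid M] (f : List ι → M) (l : List ι) (L : List (List ι)) :
    ((l :: L).sections.map f).sum =
      (l.map fun i ↦ (L.sections.map fun s ↦ f (i :: s)).sum).sum := by
  rw [sum_map_sum_map_comm]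
  simp only [List.sections, List.map_flatMap, List.map_map, Function.comp_def]
  rw [List.flatMap_def, List.sum_flatten, List.map_map]
  rfl

open Nat in
theorem prod_factorial_count_cons [DecidableEq ι] (i : ι) (l : List ι) :
    ∏ x ∈ (i :: l).toFinset, ((i :: l).count x)! =
      (1 + l.count i) * ∏ x ∈ l.toFinset, (l.count x)! := by
  have hl : ∏ x ∈ l.toFinset, (l.count x)! = ∏ x ∈ insert i l.toFinset, (l.count x)! :=
    Finset.prod_subset (Finset.subset_insert _ _) fun x _ hx ↦ by
      rw [List.count_eq_zero_of_not_mem (by simpa using hx), factorial_zero]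
  have hi : i ∈ insert i l.toFinset := Finset.mem_insert_self _ _
  rw [hl, List.toFinset_cons, ← Finset.mul_prod_erase _ _ hi, ← Finset.mul_prod_erase _ _ hi,
    List.count_cons_self, factorial_succ, mul_assoc, add_comm 1]
  congr 2
  exact Finset.prod_congr rfl fun x hx ↦ by
    rw [List.count_cons_of_ne (Finset.ne_of_mem_erase hx).symm]

/-- All ways of singling out one entry of a list: the pairs consisting of an entry and the list of
the remaining ones, one pair for each position. -/
def picks : List ι → List (ι × List ι)
  | [] => []
  | i :: l => (i, l) :: (picks l).map fun p ↦ (p.1, i :: p.2)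

theorem perm_of_mem_picks {l : List ι} {p : ι × List ι} (hp : p ∈ picks l) :
    l.Perm (p.1 :: p.2) := by
  induction l generalizing p with
  | nil => simp [picks] at hp
  | cons i l ih =>
    rw [picks, List.mem_cons, List.mem_map] at hp
    obtain rfl | ⟨q, hq, rfl⟩ := hp
    · exact .refl _
    · exact ((ih hq).cons i).trans (.swap _ _ _)

theorem map_fst_picks (l : List ι) : (picks l).map Prod.fst = l := by
  induction l with
  | nil => rfl
  | cons i l ih => simpa [picks, Function.comp_def] using ih

end ListSums

variable {m : ℕ}

@[elab_as_elim]
theorem node_induction {P : CTree m → Prop}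
    (node : ∀ l ts, (∀ t ∈ ts, P t) → P (.node l ts)) : ∀ t, P t
  | .node l ts => node l ts fun t _ ↦ node_induction node t
decreasing_by
  have := List.sizeOf_lt_of_mem ‹t ∈ ts›
  simp only [CTree.node.sizeOf_spec]
  omega

/-- A complete isomorphism invariant of colored rooted trees. It turns multiplicities of isomorphism
classes in a list of trees into multiplicities of natural numbers. -/
def code : CTree m → ℕ
  | .node l ts => Nat.pair l (Encodable.encode (ts.map fun t ↦ code t : Multiset ℕ))

theorem code_node_eq_iff {l l' : Fin (m + 1)} {ts us : List (CTree m)} :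
    code (.node l ts) = code (.node l' us) ↔ l = l' ∧ (ts.map code).Perm (us.map code) := by
  rw [code, code, Nat.pair_eq_pair, Encodable.encode_inj, Multiset.coe_eq_coe, Fin.val_inj]

theorem pickEqv_eq_ite (t : CTree m) (us : List (CTree m)) :
    pickEqv t us = if us.any (eqv t) then some (us.eraseP (eqv t)) else none := by
  induction us with
  | nil => simp [pickEqv]
  | cons u us ih =>
    cases h : eqv t u
    · rw [pickEqv, ih]
      by_cases h' : us.any (eqv t) <;> simp [h, h']
    · simp [pickEqv, h]

theorem bagEqv_cons (t : CTree m) (ts us : List (CTree m)) :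
    bagEqv (t :: ts) us = (us.any (eqv t) && bagEqv ts (us.eraseP (eqv t))) := by
  rw [bagEqv, pickEqv_eq_ite]
  by_cases h : us.any (eqv t) <;> simp [h]

mutual
theorem eqv_iff : ∀ t u : CTree m, eqv t u ↔ code t = code u
  | .node l ts, .node l' us => by
    rw [eqv, code_node_eq_iff, Bool.and_eq_true, beq_iff_eq, bagEqv_iff]
termination_by t => sizeOf t

theorem bagEqv_iff : ∀ ts us : List (CTree m), bagEqv ts us ↔ (ts.map code).Perm (us.map code)
  | [], us => by cases us <;> simp [bagEqv]
  | t :: ts, us => by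
    have ht : eqv t = (code t == ·) ∘ code := funext fun u ↦ by
      rw [Bool.eq_iff_iff, eqv_iff t u, Function.comp, beq_iff_eq]
    have hmem : us.any (eqv t) ↔ code t ∈ us.map code := by
      simp only [ht, List.any_eq_true, List.mem_map, Function.comp, beq_iff_eq,
        eq_comm (a := code t)]
    rw [bagEqv_cons, Bool.and_eq_true, bagEqv_iff ts, hmem, List.map_cons,
      List.cons_perm_iff_perm_erase, List.erase_eq_eraseP, List.eraseP_map, ht]
termination_by ts => sizeOf ts
end

theorem eqv_comm (t u : CTree m) : eqv t u = eqv u t := by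
  rw [Bool.eq_iff_iff, eqv_iff, eqv_iff, eq_comm]

theorem countP_eqv (t : CTree m) (us : List (CTree m)) :
    us.countP (eqv t) = (us.map code).count (code t) := by
  rw [List.count, List.countP_map]
  congr 1
  funext u
  rw [Bool.eq_iff_iff, eqv_iff, Function.comp, beq_iff_eq, eq_comm]

theorem bagEqv_cons_of_mem_picks {t : CTree m} {ts us : List (CTree m)}
    {p : CTree m × List (CTree m)} (hp : p ∈ picks us) (ht : eqv t p.1) :
    bagEqv (t :: ts) us = bagEqv ts p.2 := by
  have hus : (us.map code).Perm (code t :: p.2.map code) := by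
    simpa [(eqv_iff _ _).1 ht] using (perm_of_mem_picks hp).map code
  rw [Bool.eq_iff_iff, bagEqv_iff, bagEqv_iff, hus.congr_right, List.map_cons, List.perm_cons]

open Nat in
theorem symFact_eq_prod_factorial (ts : List (CTree m)) :
    symFact ts = ∏ c ∈ (ts.map code).toFinset, ((ts.map code).count c)! := by
  induction ts with
  | nil => simp [symFact]
  | cons t ts ih =>
    rw [symFact, ih, ← List.countP_eq_length_filter, countP_eqv, List.map_cons,
      prod_factorial_count_cons]

theorem symFact_pos (ts : List (CTree m)) : 0 < symFact ts := by
  rw [symFact_eq_prod_factorial]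
  exact Finset.prod_pos fun _ _ ↦ Nat.factorial_pos _

theorem symFact_congr {ts us : List (CTree m)} (h : bagEqv ts us) : symFact ts = symFact us := by
  have hperm := (bagEqv_iff _ _).1 h
  simp only [symFact_eq_prod_factorial, List.toFinset_eq_of_perm _ _ hperm, hperm.count_eq]

theorem autCard_node (l : Fin (m + 1)) (ts : List (CTree m)) :
    autCard (.node l ts) = symFact ts * (ts.map autCard).prod := by
  rw [autCard, List.attach_map_val]

theorem autCard_pos (t : CTree m) : 0 < autCard t := by
  induction t using node_induction with
  | node l ts ih =>
    rw [autCard_node]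
    exact mul_pos (symFact_pos ts) (List.prod_pos (by simpa using ih))

theorem alpha_eq_inv_autCard (t : CTree m) : alpha t = (autCard t : ℚ)⁻¹ := by
  induction t using node_induction with
  | node l ts ih =>
    rw [alpha, autCard_node, List.attach_map_val, List.map_congr_left ih]
    simp [mul_comm, List.prod_inv, Function.comp_def]

theorem autCard_congr {t u : CTree m} (h : eqv t u) : autCard t = autCard u := by
  induction t using node_induction generalizing u with
  | node l ts ih =>
    obtain ⟨l', us⟩ := u
    have hbag : bagEqv ts us := by rw [eqv, Bool.and_eq_true] at h; exact h.2
    have hcode : Multiset.Rel (code · = code ·)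
        (ts : Multiset (CTree m)) (us : Multiset (CTree m)) := by
      rw [← Multiset.rel_map, Multiset.rel_eq]
      simpa using (bagEqv_iff _ _).1 hbag
    have haut : Multiset.Rel (autCard · = autCard ·)
        (ts : Multiset (CTree m)) (us : Multiset (CTree m)) :=
      hcode.mono fun t ht u _ htu ↦ ih t ht ((eqv_iff _ _).2 htu)
    rw [← Multiset.rel_map, Multiset.rel_eq, Multiset.map_coe, Multiset.map_coe,
      Multiset.coe_eq_coe] at haut
    rw [autCard_node, autCard_node, symFact_congr hbag, haut.prod_eq]

/-- The number of isomorphisms from `t` to `u`. As these form a torsor under the automorphisms of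
`t` whenever there are any, it is given by a formula instead of as a cardinality. -/
def numIso (t u : CTree m) : ℕ := if eqv t u then autCard t else 0

/-- The number of isomorphisms between the forests with components `ts` and `us`: a permutation
matching isomorphic components, together with isomorphisms of the matched components. -/
def numIsoL (ts us : List (CTree m)) : ℕ :=
  if bagEqv ts us then symFact ts * (ts.map autCard).prod else 0

theorem numIso_eq_ite_autCard_right (t u : CTree m) :
    numIso t u = if eqv t u then autCard u else 0 := by
  rw [numIso]
  split_ifs with h
  exacts [autCard_congr h, rfl]

theorem numIso_node (l l' : Fin (m + 1)) (ts us : List (CTree m)) :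
    numIso (.node l ts) (.node l' us) = if l = l' then numIsoL ts us else 0 := by
  simp only [numIso, numIsoL, eqv, autCard_node, Bool.and_eq_true, beq_iff_eq, ite_and]

theorem numIsoL_cons (t : CTree m) (ts us : List (CTree m)) :
    numIsoL (t :: ts) us = ((picks us).map fun p ↦ numIso t p.1 * numIsoL ts p.2).sum := by
  set c := if bagEqv (t :: ts) us then autCard t * (symFact ts * (ts.map autCard).prod) else 0
    with hc
  have hterm : ∀ p ∈ picks us,
      numIso t p.1 * numIsoL ts p.2 = if eqv t p.1 then c else 0 := by
    intro p hp
    by_cases ht : eqv t p.1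
    · simp only [numIso, numIsoL, hc, ht, bagEqv_cons_of_mem_picks hp ht, if_true, mul_ite,
        mul_zero]
    · simp [numIso, ht]
  have hsum : ((picks us).map fun p ↦ numIso t p.1 * numIsoL ts p.2).sum =
      us.countP (eqv t) * c := by
    rw [List.map_congr_left hterm, ← smul_eq_mul, countP_nsmul_eq_sum_map_ite]
    conv_rhs => rw [← map_fst_picks us, List.map_map]
    rfl
  rw [hsum, numIsoL, hc]
  split_ifs with h
  · have hcount : us.countP (eqv t) = 1 + ts.countP (eqv t) := by
      rw [countP_eqv, ← ((bagEqv_iff _ _).1 h).count_eq, countP_eqv, List.map_cons,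
        List.count_cons_self, add_comm]
    rw [hcount, symFact, List.countP_eq_length_filter, List.map_cons, List.prod_cons]
    ring
  · rw [mul_zero]

mutual
/-- All ways of cutting an edge of a tree, as pairs of the part containing the root and the subtree
cut off. -/
def cutT : CTree m → List (CTree m × CTree m)
  | .node l us => (picks us).map (fun p ↦ (.node l p.2, p.1)) ++
      (cutL us).map fun q ↦ (.node l q.1, q.2)
termination_by t => sizeOf t

/-- All ways of cutting an edge of a forest, as pairs of the remaining forest and the subtree cut
off. -/
def cutL : List (CTree m) → List (List (CTree m) × CTree m)
  | [] => []
  | u :: us => (cutT u).map (fun q ↦ (q.1 :: us, q.2)) ++ (cutL us).map fun q ↦ (u :: q.1, q.2)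
termination_by us => sizeOf us
end

theorem sum_cutL_sum_picks {M : Type*} [AddCommMonoid M] (us : List (CTree m))
    (f : CTree m → List (CTree m) → CTree m → M) :
    ((cutL us).map fun q ↦ ((picks q.1).map fun p ↦ f p.1 p.2 q.2).sum).sum =
      ((picks us).map fun p ↦ ((cutT p.1).map fun q ↦ f q.1 p.2 q.2).sum +
        ((cutL p.2).map fun q ↦ f p.1 q.1 q.2).sum).sum := by
  induction us generalizing f with
  | nil => simp [cutL, picks]
  | cons u us ih =>
    specialize ih fun v vs w ↦ f v (u :: vs) w
    simp only [cutL, picks, List.map_append, List.sum_append, List.map_cons, List.sum_cons,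
      List.map_map, Function.comp_def, List.sum_map_add] at ih ⊢
    rw [ih, sum_map_sum_map_comm fun (q : CTree m × CTree m) (p : CTree m × List (CTree m)) ↦
      f p.1 (q.1 :: p.2) q.2]
    abel

mutual
theorem sum_numIso_attachT (δ : CTree m) : ∀ θ τ : CTree m,
    ((attachT δ θ).map fun σ ↦ numIso σ τ).sum =
      ((cutT τ).map fun q ↦ numIso θ q.1 * numIso δ q.2).sum
  | .node l ts, .node l' us => by
    simp only [attachT, cutT, List.map_cons, List.sum_cons, List.map_append, List.sum_append,
      List.map_map, Function.comp_def, numIso_node]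
    by_cases hl : l = l'
    · simp only [hl, if_true, numIsoL_cons, sum_numIsoL_attachL δ ts us, mul_comm]
    · simp [hl]
termination_by θ => sizeOf θ

theorem sum_numIsoL_attachL (δ : CTree m) : ∀ ts us : List (CTree m),
    ((attachL δ ts).map fun σs ↦ numIsoL σs us).sum =
      ((cutL us).map fun q ↦ numIsoL ts q.1 * numIso δ q.2).sum
  | [], us => by cases us <;> simp [attachL, cutL, numIsoL, bagEqv, Function.comp_def]
  | t :: ts, us => by
    calc ((attachL δ (t :: ts)).map fun σs ↦ numIsoL σs us).sum
      _ = ((picks us).map fun p ↦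
            ((attachT δ t).map fun σ ↦ numIso σ p.1).sum * numIsoL ts p.2 +
              numIso t p.1 * ((attachL δ ts).map fun σs ↦ numIsoL σs p.2).sum).sum := by
        simp only [attachL, List.map_append, List.sum_append, List.map_map, Function.comp_def,
          numIsoL_cons, List.sum_map_add, ← List.sum_map_mul_right, ← List.sum_map_mul_left]
        congr 1 <;> exact sum_map_sum_map_comm _ _ _
      _ = ((picks us).map fun p ↦
            ((cutT p.1).map fun q ↦ numIso t q.1 * numIsoL ts p.2 * numIso δ q.2).sum +
              ((cutL p.2).map fun q ↦ numIso t p.1 * numIsoL ts q.1 * numIso δ q.2).sum).sum := by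
        simp only [sum_numIso_attachT δ t, sum_numIsoL_attachL δ ts, ← List.sum_map_mul_right,
          ← List.sum_map_mul_left, mul_assoc, mul_comm (numIso δ _)]
      _ = ((cutL us).map fun q ↦
            ((picks q.1).map fun p ↦ numIso t p.1 * numIsoL ts p.2 * numIso δ q.2).sum).sum :=
        (sum_cutL_sum_picks us fun v vs w ↦ numIso t v * numIsoL ts vs * numIso δ w).symm
      _ = ((cutL us).map fun q ↦ numIsoL (t :: ts) q.1 * numIso δ q.2).sum := by
        simp only [numIsoL_cons, List.sum_map_mul_right]
termination_by ts => sizeOf ts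
end

/-- All splittings of a forest: the pairs of the list of the nonempty root-sharing subtrees of its
components and the list of all remainder trees. -/
def splitL (ts : List (CTree m)) : List (List (CTree m) × List (CTree m)) :=
  (ts.map split).sections.map fun cs ↦ (cs.filterMap Prod.fst, (cs.map Prod.snd).flatten)

theorem split_node (l : Fin (m + 1)) (ts : List (CTree m)) :
    split (.node l ts) =
      (none, [.node l ts]) :: (splitL ts).map fun p ↦ (some (.node l p.1), p.2) := by
  rw [split, splitL, List.map_map, List.attach_map_val]
  rfl

theorem sum_splitL_cons {M : Type*} [AddCommMonoid M]
    (f : List (CTree m) × List (CTree m) → M) (t : CTree m) (ts : List (CTree m)) :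
    ((splitL (t :: ts)).map f).sum =
      ((split t).map fun p ↦
        ((splitL ts).map fun q ↦ f (p.1.toList ++ q.1, p.2 ++ q.2)).sum).sum := by
  simp only [splitL, List.map_map, List.map_cons, sum_map_sections_cons, Function.comp_def]
  congr! 6 with ⟨_ | _, _⟩

mutual
theorem sum_split_of_forall_two_le {M : Type*} [AddCommMonoid M] : ∀ (t : CTree m)
    {f : Option (CTree m) × List (CTree m) → M}, (∀ p, 2 ≤ p.2.length → f p = 0) →
      ((split t).map f).sum =
        f (some t, []) + f (none, [t]) + ((cutT t).map fun q ↦ f (some q.1, [q.2])).sum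
  | .node l ts, f, hf => by
    have hts := sum_splitL_of_forall_two_le ts (g := fun p ↦ f (some (.node l p.1), p.2))
      fun p hp ↦ hf _ hp
    simp only [split_node, cutT, List.map_cons, List.sum_cons, List.map_map, Function.comp_def, hts,
      List.map_append, List.sum_append]
    abel
termination_by t => sizeOf t

theorem sum_splitL_of_forall_two_le {M : Type*} [AddCommMonoid M] : ∀ (ts : List (CTree m))
    {g : List (CTree m) × List (CTree m) → M}, (∀ p, 2 ≤ p.2.length → g p = 0) →
      ((splitL ts).map g).sum = g (ts, []) + ((picks ts).map fun p ↦ g (p.2, [p.1])).sum +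
        ((cutL ts).map fun q ↦ g (q.1, [q.2])).sum
  | [], g, _ => by simp [splitL, picks, cutL]
  | t :: ts, g, hg => by
    let f (p : Option (CTree m) × List (CTree m)) : M :=
      g (p.1.toList ++ ts, p.2) + ((picks ts).map fun q ↦ g (p.1.toList ++ q.2, p.2 ++ [q.1])).sum +
        ((cutL ts).map fun q ↦ g (p.1.toList ++ q.1, p.2 ++ [q.2])).sum
    have hsum (p : Option (CTree m) × List (CTree m)) :
        ((splitL ts).map fun q ↦ g (p.1.toList ++ q.1, p.2 ++ q.2)).sum = f p := by
      rw [sum_splitL_of_forall_two_le ts fun q hq ↦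
        hg _ (by simpa using hq.trans (Nat.le_add_left _ _)), List.append_nil]
    have hf : ∀ p, 2 ≤ p.2.length → f p = 0 := fun p hp ↦ by
      have hzero : ∀ xs ds, g (xs, p.2 ++ ds) = 0 := fun _ _ ↦
        hg _ (by simpa using hp.trans (Nat.le_add_right _ _))
      have hzero' : ∀ xs, g (xs, p.2) = 0 := fun _ ↦ hg _ hp
      simp [f, hzero, hzero']
    have hpair : ∀ xs a b, g (xs, [a, b]) = 0 := fun _ _ _ ↦ hg _ le_rfl
    simp only [sum_splitL_cons, hsum]
    rw [sum_split_of_forall_two_le t hf]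
    simp only [f, Option.toList_some, Option.toList_none, List.singleton_append, List.nil_append,
      hpair, List.map_const', List.sum_replicate, smul_zero, add_zero, picks, cutL, List.map_cons,
      List.map_append, List.map_map, Function.comp_def, List.sum_cons, List.sum_append]
    abel
termination_by ts => sizeOf ts
end

theorem gammaC_eq_countP_cutT (τ θ δ : CTree m) :
    gammaC τ θ δ = (cutT τ).countP fun q ↦ eqv q.1 θ && eqv q.2 δ := by
  have countP_eq_sum {ι : Type} (p : ι → Bool) (l : List ι) :
      l.countP p = (l.map fun i ↦ if p i then 1 else 0).sum := by
    simpa only [smul_eq_mul, mul_one] using countP_nsmul_eq_sum_map_ite p l (1 : ℕ)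
  rw [gammaC, ← List.countP_eq_length_filter, countP_eq_sum, countP_eq_sum,
    sum_split_of_forall_two_le]
  · simp
  · rintro ⟨_ | _, _ | ⟨_, _ | _⟩⟩ hp <;> simp_all

theorem betaC_mul_autCard (τ θ δ : CTree m) :
    betaC τ θ δ * autCard τ = ((attachT δ θ).map fun σ ↦ numIso σ τ).sum := by
  simp only [betaC, ← List.countP_eq_length_filter, numIso_eq_ite_autCard_right,
    ← countP_nsmul_eq_sum_map_ite, smul_eq_mul]

theorem gammaC_mul_autCard_mul_autCard (τ θ δ : CTree m) :
    gammaC τ θ δ * (autCard θ * autCard δ) =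
      ((cutT τ).map fun q ↦ numIso θ q.1 * numIso δ q.2).sum := by
  rw [gammaC_eq_countP_cutT, ← smul_eq_mul, countP_nsmul_eq_sum_map_ite]
  simp only [numIso, eqv_comm θ, eqv_comm δ, Bool.and_eq_true, ite_zero_mul_ite_zero]

theorem betaC_mul_autCard_eq_gammaC_mul (τ θ δ : CTree m) :
    betaC τ θ δ * autCard τ = gammaC τ θ δ * (autCard θ * autCard δ) := by
  rw [betaC_mul_autCard, sum_numIso_attachT, gammaC_mul_autCard_mul_autCard]

end CTree

open CTree in
theorem stmt15_general (m : ℕ) (τ θ δ : CTree m) :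
    alpha θ * alpha δ * (betaC τ θ δ : ℚ) = alpha τ * (gammaC τ θ δ : ℚ) := by
  have hcount : (betaC τ θ δ * autCard τ : ℚ) = gammaC τ θ δ * (autCard θ * autCard δ) := by
    exact_mod_cast betaC_mul_autCard_eq_gammaC_mul τ θ δ
  have haut (t : CTree m) : (autCard t : ℚ) ≠ 0 := by exact_mod_cast (autCard_pos t).ne'
  simp only [alpha_eq_inv_autCard]
  field_simp [haut τ, haut θ, haut δ]
  linarith

open CTree in
theorem stmt15 (m : ℕ) (τ θ δ : CTree m)
    (h : ∃ τ' ∈ attachT δ θ, eqv τ' τ = true) :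
    alpha θ * alpha δ * (betaC τ θ δ : ℚ) = alpha τ * (gammaC τ θ δ : ℚ) := by
  exact stmt15_general m τ θ δ
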